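/- Let f : ℕ → ℝ be the function computed by a black box trained for language modelling over a one-letter alphabet, i.e. f(m) ≥ 0 for all m and Σ_{m≥0} f(m) = 1, let H = H_f, and for n ∈ ℕ let H^n = H_{f^n} be the truncated Hankel operator, where f^n(m) = f(m) for m ≤ n and f^n(m) = 0 for m > n. Let k < n and let g : ℕ → ℝ be an absolutely summable function whose Hankel operator G = H_g has range of dimension at most k and satisfies ‖H^n − G‖ = σ_k(H^n) (the optimal rank-k Hankel approximation of H^n given by the AAK theorem). Then (Σ_{m≥0} |f(m) − g(m)|²)^{1/2} ≤ σ_k(H) + 2·(1 − Σ_{i=0}^{n} f(i)). -/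

import Mathlib

/-!
The `0`-th column of a Hankel matrix is its symbol, so `f - g = (H - G) e₀` and
`‖f - g‖₂ ≤ ‖H - G‖ ≤ ‖H - Hn‖ + ‖Hn - G‖`. The second term is `σ_k(Hn)`, and
approximation numbers are 1-Lipschitz in the operator norm (`approxNum_le_add`), so it is at
most `σ_k(H) + ‖H - Hn‖`. Finally `H - Hn` is the Hankel operator of the nonnegative tail of
`f`, and Schur's test (`IsHankelOp.norm_le`) bounds its norm by the total mass of that tail,
`1 - ∑_{i ≤ n} f i`.
-/

/-- `L2` is the Hilbert space `ℓ²(ℕ)` of square-summable real sequences. -/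
noncomputable abbrev L2 : Type := lp (fun _ : ℕ => ℝ) 2

/-- `IsHankelOp f T` says that the bounded linear operator `T` on `ℓ²(ℕ)` is the
Hankel operator associated with `f : ℕ → ℝ`, i.e. for every `x ∈ ℓ²(ℕ)` and every
`i ∈ ℕ` the series `Σ_{j≥0} f(i+j)·x(j)` converges and equals `(T x)(i)`. -/
def IsHankelOp (f : ℕ → ℝ) (T : L2 →L[ℝ] L2) : Prop :=
  ∀ x : L2, ∀ i : ℕ, HasSum (fun j : ℕ => f (i + j) * x j) (T x i)

/-- The truncation `f^n` of `f` : `f^n(m) = f(m)` for `m ≤ n` and `0` otherwise. -/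
def trunc (f : ℕ → ℝ) (n : ℕ) : ℕ → ℝ := fun m => if m ≤ n then f m else 0

/-- The `k`-th approximation number of a bounded linear operator `T` on `ℓ²(ℕ)`:
`σ_k(T) = inf { ‖T − F‖ : F bounded linear with range of dimension at most k }`. -/
noncomputable def approxNum (T : L2 →L[ℝ] L2) (k : ℕ) : ℝ :=
  sInf { r : ℝ | ∃ F : L2 →L[ℝ] L2,
    Module.rank ℝ (LinearMap.range (F : L2 →ₗ[ℝ] L2)) ≤ k ∧ r = ‖T - F‖ }

lemma IsHankelOp.sub {f g : ℕ → ℝ} {S T : L2 →L[ℝ] L2} (hS : IsHankelOp f S)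
    (hT : IsHankelOp g T) : IsHankelOp (fun m => f m - g m) (S - T) := by
  intro x i
  have h := (hS x i).sub (hT x i)
  simpa [sub_mul] using h

lemma L2.hasSum_sq (x : L2) : HasSum (fun j => x j ^ 2) (‖x‖ ^ 2) := by
  have h := lp.hasSum_norm (p := 2) (by norm_num) x
  simpa using h

/-- The operator norm of a Hankel operator with nonnegative symbol is at most the `ℓ¹` norm of
the symbol: Cauchy–Schwarz with weights `t (i + j)` bounds each `(D x)(i)²` by
`τ ∑_j t (i + j) x(j)²`, and the sum over `i` is then taken inside. -/
lemma IsHankelOp.norm_le {t : ℕ → ℝ} {D : L2 →L[ℝ] L2} (hD : IsHankelOp t D)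
    (ht : ∀ m, 0 ≤ t m) {τ : ℝ} (hτ : HasSum t τ) : ‖D‖ ≤ τ := by
  have hτ0 : 0 ≤ τ := hτ.nonneg ht
  have row : ∀ (i : ℕ) (s : Finset ℕ), ∑ j ∈ s, t (i + j) ≤ τ := by
    intro i s
    have h := sum_le_hasSum (s.map (addLeftEmbedding i)) (fun m _ => ht m) hτ
    simpa using h
  refine D.opNorm_le_bound hτ0 fun x => ?_
  have hx := L2.hasSum_sq x
  have hsum : ∀ i, Summable fun j => t (i + j) * x j ^ 2 := by
    intro i
    refine Summable.of_nonneg_of_le (fun j => mul_nonneg (ht _) (sq_nonneg _)) (fun j => ?_)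
      (hx.summable.mul_left τ)
    exact mul_le_mul_of_nonneg_right (le_hasSum hτ _ fun m _ => ht m) (sq_nonneg _)
  have entry : ∀ i, (D x i) ^ 2 ≤ τ * ∑' j, t (i + j) * x j ^ 2 := by
    intro i
    refine le_of_tendsto ((hD x i).pow 2) (Filter.Eventually.of_forall fun s => ?_)
    calc (∑ j ∈ s, t (i + j) * x j) ^ 2
        ≤ (∑ j ∈ s, t (i + j)) * ∑ j ∈ s, t (i + j) * x j ^ 2 :=
          Finset.sum_sq_le_sum_mul_sum_of_sq_le_mul s (fun j _ => ht _)
            (fun j _ => mul_nonneg (ht _) (sq_nonneg _)) (fun j _ => le_of_eq (by ring))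
      _ ≤ τ * ∑' j, t (i + j) * x j ^ 2 :=
          mul_le_mul (row i s)
            ((hsum i).sum_le_tsum s fun j _ => mul_nonneg (ht _) (sq_nonneg _))
            (Finset.sum_nonneg fun j _ => mul_nonneg (ht _) (sq_nonneg _)) hτ0
  have key : ‖D x‖ ^ 2 ≤ (τ * ‖x‖) ^ 2 := by
    refine hasSum_le_of_sum_le (L2.hasSum_sq (D x)) fun s => ?_
    calc ∑ i ∈ s, (D x i) ^ 2
        ≤ ∑ i ∈ s, τ * ∑' j, t (i + j) * x j ^ 2 := Finset.sum_le_sum fun i _ => entry i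
      _ = τ * ∑' j, ∑ i ∈ s, t (i + j) * x j ^ 2 := by
          rw [← Finset.mul_sum, Summable.tsum_finsetSum fun i _ => hsum i]
      _ ≤ τ * (τ * ‖x‖ ^ 2) := by
          refine mul_le_mul_of_nonneg_left ?_ hτ0
          refine hasSum_le (fun j => ?_) (summable_sum fun i _ => hsum i).hasSum (hx.mul_left τ)
          rw [← Finset.sum_mul]
          refine mul_le_mul_of_nonneg_right ?_ (sq_nonneg _)
          simpa [add_comm] using row j s
      _ = (τ * ‖x‖) ^ 2 := by ring
  exact le_of_sq_le_sq key (by positivity)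

lemma approxNum_le_add (S T : L2 →L[ℝ] L2) (k : ℕ) :
    approxNum S k ≤ approxNum T k + ‖T - S‖ := by
  rw [← sub_le_iff_le_add]
  refine le_csInf ⟨‖T - 0‖, 0, by simp, rfl⟩ ?_
  rintro r ⟨F, hF, rfl⟩
  rw [sub_le_iff_le_add]
  have h1 : approxNum S k ≤ ‖S - F‖ :=
    csInf_le ⟨0, by rintro r ⟨F, -, rfl⟩; exact norm_nonneg _⟩ ⟨F, hF, rfl⟩
  have h2 : ‖S - F‖ ≤ ‖T - F‖ + ‖T - S‖ := by
    rw [show S - F = (T - F) - (T - S) by abel]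
    exact norm_sub_le _ _
  exact h1.trans h2

/-- Applying a Hankel operator to the first basis vector bounds the `ℓ²` norm of the symbol. -/
lemma IsHankelOp.sqrt_tsum_le {t : ℕ → ℝ} {D : L2 →L[ℝ] L2} (hD : IsHankelOp t D) :
    Real.sqrt (∑' m, |t m| ^ 2) ≤ ‖D‖ := by
  let e : L2 := lp.single 2 0 (1 : ℝ)
  have he : ‖e‖ = 1 := by simp [e, lp.norm_single]
  have hcol : ∀ i, D e i = t i := by
    intro i
    refine (hD e i).unique ?_
    have h := hasSum_single (f := fun j => t (i + j) * e j) 0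
      (fun j hj => by simp [e, lp.single_apply, hj])
    simpa [e, lp.single_apply] using h
  have h := (L2.hasSum_sq (D e)).tsum_eq
  simp only [hcol] at h
  simp only [sq_abs]
  rw [h, Real.sqrt_sq (norm_nonneg _)]
  simpa [he] using D.le_opNorm e

/-- let `f` be a probability distribution on `ℕ` with Hankel operator
`H`, let `H^n` be the Hankel operator of the truncation `f^n`, let `k < n`, and let
`g` be absolutely summable with Hankel operator `G = H_g` of rank at most `k`
satisfying `‖H^n − G‖ = σ_k(H^n)`. Then
`‖f − g‖_{ℓ²} ≤ σ_k(H) + 2·(1 − Σ_{i=0}^n f(i))`. -/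
theorem l2_error_bound (f : ℕ → ℝ)
    (hf_nonneg : ∀ m, 0 ≤ f m) (hf_sum : HasSum f 1)
    (n k : ℕ) (hkn : k < n) (H Hn : L2 →L[ℝ] L2)
    (hH : IsHankelOp f H) (hHn : IsHankelOp (trunc f n) Hn)
    (g : ℕ → ℝ) (hg : Summable fun m => |g m|)
    (G : L2 →L[ℝ] L2) (hG : IsHankelOp g G)
    (hG_rank : Module.rank ℝ (LinearMap.range (G : L2 →ₗ[ℝ] L2)) ≤ k)
    (hG_opt : ‖Hn - G‖ = approxNum Hn k) :
    Real.sqrt (∑' m : ℕ, |f m - g m| ^ 2) ≤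
      approxNum H k + 2 * (1 - ∑ i ∈ Finset.range (n + 1), f i) := by
  have htail : ‖H - Hn‖ ≤ 1 - ∑ i ∈ Finset.range (n + 1), f i := by
    refine (hH.sub hHn).norm_le (fun m => ?_) (hf_sum.sub ?_)
    · unfold trunc
      split_ifs
      · simp
      · simpa using hf_nonneg m
    · have h := hasSum_sum_of_ne_finset_zero (L := .unconditional ℕ) (f := trunc f n)
        (s := Finset.range (n + 1))
        (fun m hm => if_neg (by simpa [Nat.lt_succ_iff] using hm))
      have heq : ∑ m ∈ Finset.range (n + 1), trunc f n m = ∑ m ∈ Finset.range (n + 1), f m :=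
        Finset.sum_congr rfl fun m hm => if_pos (Nat.lt_succ_iff.mp (Finset.mem_range.mp hm))
      rwa [heq] at h
  have h1 := (hH.sub hG).sqrt_tsum_le
  have h2 : ‖H - G‖ ≤ ‖H - Hn‖ + ‖Hn - G‖ := norm_sub_le_norm_sub_add_norm_sub _ _ _
  have h3 := approxNum_le_add Hn H k
  linarith
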